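/- arXiv:1808.07908 — 2 statements merged into one kernel-verified Lean document; each statement's English description precedes it below -/
import Mathlib

section
/- Let d ≥ 1 be an integer, and let m ≠ 0 and η ≠ 0 be real numbers. Then the function k ↦ (m + η|k|²)/(|k|² + (m − η|k|²)²)^{(d+1)/2} is Lebesgue integrable on ℝ^d and (1/A_d) ∫_{ℝ^d} (m + η|k|²) / (|k|² + (m − η|k|²)²)^{(d+1)/2} dk = (1/2)(sgn(m) + sgn(η)), where A_d = 2π^{(d+1)/2}/Γ((d+1)/2) is the volume of the unit sphere Sᵈ in ℝ^{d+1}. -/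
open MeasureTheory

/-!
In polar coordinates the integral is the area of `Sᵈ⁻¹` times a one-dimensional integral, which the
Cauchy–Schlömilch substitution `t = ηr - m/r` (up to sign, the ratio of the last component of
`h(k) = (k, m - η|k|²)` to `|k|`) turns into that of `φ t = (1 + t²)^(-(d+1)/2)`. As `r` runs over
`(0, ∞)`, `t` goes from `-sgn(m)·∞` to `sgn(η)·∞`, so the even function `φ` contributes
`(sgn m + sgn η)/2` times its total integral. By Fubini applied to `Γ(s)(1 + t²)⁻ˢ` written as a
Gamma integral, the latter is the ratio of the areas of `Sᵈ` and `Sᵈ⁻¹`.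
-/

open Set Filter Topology Module
open Real (Gamma sign)
open scoped Real

section HalfLineFTC

variable {F : Type*} [NormedAddCommGroup F] [NormedSpace ℝ F]

lemma hasDerivAt_update_of_ne {f : ℝ → F} {f' c : F} {a x : ℝ} (hx : x ≠ a)
    (hf : HasDerivAt f f' x) : HasDerivAt (Function.update f a c) f' x :=
  hf.congr_of_eventuallyEq <| by
    filter_upwards [eventually_ne_nhds hx] with y hy using Function.update_of_ne hy _ _

lemma tendsto_update_atTop {α : Type*} {f : ℝ → α} {l : Filter α} (a : ℝ) (c : α)
    (hf : Tendsto f atTop l) : Tendsto (Function.update f a c) atTop l :=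
  hf.congr' <| by
    filter_upwards [eventually_ne_atTop a] with y hy using (Function.update_of_ne hy _ _).symm

lemma continuousWithinAt_Ici_update {α : Type*} [TopologicalSpace α] {f : ℝ → α} {a : ℝ} {l : α}
    (hf : Tendsto f (𝓝[>] a) (𝓝 l)) :
    ContinuousWithinAt (Function.update f a l) (Ici a) a := by
  rwa [continuousWithinAt_update_same, Ici_sdiff_left]

lemma integrableOn_Ioi_deriv_of_nonneg_of_tendsto_nhdsGT {f f' : ℝ → ℝ} {a l l' : ℝ}
    (hderiv : ∀ x ∈ Ioi a, HasDerivAt f (f' x) x) (hf' : ∀ x ∈ Ioi a, 0 ≤ f' x)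
    (hl : Tendsto f (𝓝[>] a) (𝓝 l)) (hl' : Tendsto f atTop (𝓝 l')) :
    IntegrableOn f' (Ioi a) :=
  integrableOn_Ioi_deriv_of_nonneg (continuousWithinAt_Ici_update hl)
    (fun x hx ↦ hasDerivAt_update_of_ne (ne_of_gt hx) (hderiv x hx)) hf'
    (tendsto_update_atTop a l hl')

lemma integral_Ioi_of_hasDerivAt_of_tendsto_nhdsGT [CompleteSpace F] {f f' : ℝ → F} {a : ℝ}
    {l l' : F} (hderiv : ∀ x ∈ Ioi a, HasDerivAt f (f' x) x) (hf' : IntegrableOn f' (Ioi a))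
    (hl : Tendsto f (𝓝[>] a) (𝓝 l)) (hl' : Tendsto f atTop (𝓝 l')) :
    ∫ x in Ioi a, f' x = l' - l := by
  simpa only [Function.update_self] using
    integral_Ioi_of_hasDerivAt_of_tendsto (continuousWithinAt_Ici_update hl)
      (fun x hx ↦ hasDerivAt_update_of_ne (ne_of_gt hx) (hderiv x hx)) hf'
      (tendsto_update_atTop a l hl')

end HalfLineFTC

section CauchySchlomilch

variable {φ : ℝ → ℝ}

lemma integral_Ioi_zero_of_even (heven : Function.Even φ) :
    ∫ t in Ioi 0, φ t = (∫ t, φ t) / 2 := by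
  have habs : ∀ t, φ |t| = φ t := fun t ↦ abs_by_cases (φ · = φ t) rfl (heven t)
  rw [eq_div_iff two_ne_zero, mul_comm, ← integral_comp_abs]
  simp only [habs]

lemma tendsto_intervalIntegral_atTop_of_even (hint : Integrable φ) (heven : Function.Even φ) :
    Tendsto (fun u ↦ ∫ t in 0..u, φ t) atTop (𝓝 ((∫ t, φ t) / 2)) :=
  integral_Ioi_zero_of_even heven ▸
    intervalIntegral_tendsto_integral_Ioi 0 hint.integrableOn tendsto_id

lemma tendsto_intervalIntegral_atBot_of_even (hint : Integrable φ) (heven : Function.Even φ) :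
    Tendsto (fun u ↦ ∫ t in 0..u, φ t) atBot (𝓝 (-((∫ t, φ t) / 2))) := by
  refine ((tendsto_intervalIntegral_atTop_of_even hint heven).comp
    tendsto_neg_atBot_atTop).neg.congr fun u ↦ ?_
  have hreflect := intervalIntegral.integral_comp_neg (a := 0) (b := u) φ
  simp only [heven _, neg_zero] at hreflect
  rw [hreflect, intervalIntegral.integral_symm, Function.comp_apply]

lemma tendsto_intervalIntegral_mul_sub_div_atTop (hcont : Continuous φ) (hint : Integrable φ)
    (heven : Function.Even φ) (a b : ℝ) :
    Tendsto (fun r ↦ ∫ t in 0..(a * r - b / r), φ t) atTop (𝓝 (sign a * ((∫ t, φ t) / 2))) := by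
  have hdiv : Tendsto (fun r ↦ -(b / r)) atTop (𝓝 0) := by
    simpa using (tendsto_id.const_div_atTop b).neg
  simp only [sub_eq_add_neg]
  rcases lt_trichotomy a 0 with ha | rfl | ha
  · rw [Real.sign_of_neg ha, neg_one_mul]
    exact (tendsto_intervalIntegral_atBot_of_even hint heven).comp
      ((tendsto_id.const_mul_atTop_of_neg ha).atBot_add hdiv)
  · have hprim : Continuous fun u ↦ ∫ t in 0..u, φ t :=
      intervalIntegral.continuous_primitive (fun _ _ ↦ hcont.intervalIntegrable _ _) 0
    simpa [Function.comp_def] using (hprim.tendsto 0).comp hdiv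
  · rw [Real.sign_of_pos ha, one_mul]
    exact (tendsto_intervalIntegral_atTop_of_even hint heven).comp
      ((tendsto_id.const_mul_atTop ha).atTop_add hdiv)

lemma tendsto_intervalIntegral_mul_sub_div_nhdsGT_zero (hcont : Continuous φ)
    (hint : Integrable φ) (heven : Function.Even φ) (a b : ℝ) :
    Tendsto (fun r ↦ ∫ t in 0..(a * r - b / r), φ t) (𝓝[>] 0)
      (𝓝 (-(sign b * ((∫ t, φ t) / 2)))) := by
  -- The inversion `r ↦ r⁻¹` turns `a * r - b / r` into `-b * r - -a / r`.
  have h := (tendsto_intervalIntegral_mul_sub_div_atTop hcont hint heven (-b) (-a)).comp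
    tendsto_inv_nhdsGT_zero
  rw [Real.sign_neg, neg_mul] at h
  refine h.congr fun r ↦ ?_
  rw [Function.comp_apply, div_inv_eq_mul, show -b * r⁻¹ - -a * r = a * r - b / r by ring]

lemma hasDerivAt_intervalIntegral_mul_sub_div (hcont : Continuous φ) (a b : ℝ) {r : ℝ}
    (hr : r ≠ 0) :
    HasDerivAt (fun r ↦ ∫ t in 0..(a * r - b / r), φ t)
      (φ (a * r - b / r) * (a + b / r ^ 2)) r := by
  have hinner : HasDerivAt (fun r ↦ a * r - b / r) (a + b / r ^ 2) r := by
    convert! ((hasDerivAt_id r).const_mul a).sub ((hasDerivAt_inv hr).const_mul b) using 1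
    ring
  exact (hcont.integral_hasStrictDerivAt 0 _).hasDerivAt.comp r hinner

lemma integrableOn_comp_mul_sub_div_of_nonneg (hcont : Continuous φ) (hint : Integrable φ)
    (heven : Function.Even φ) (hnonneg : ∀ t, 0 ≤ φ t) {a b : ℝ} (ha : 0 ≤ a) (hb : 0 ≤ b) :
    IntegrableOn (fun r ↦ φ (a * r - b / r) * (a + b / r ^ 2)) (Ioi 0) :=
  integrableOn_Ioi_deriv_of_nonneg_of_tendsto_nhdsGT
    (fun _ hr ↦ hasDerivAt_intervalIntegral_mul_sub_div hcont a b (ne_of_gt hr))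
    (fun _ _ ↦ mul_nonneg (hnonneg _) (by positivity))
    (tendsto_intervalIntegral_mul_sub_div_nhdsGT_zero hcont hint heven a b)
    (tendsto_intervalIntegral_mul_sub_div_atTop hcont hint heven a b)

lemma abs_abs_mul_sub_abs_div_le (a b : ℝ) {r : ℝ} (hr : 0 < r) :
    |(|a| * r - |b| / r)| ≤ |a * r - b / r| := by
  simpa only [abs_mul, abs_div, abs_of_pos hr] using abs_abs_sub_abs_le (a * r) (b / r)

lemma integrableOn_comp_mul_sub_div (hcont : Continuous φ) (hint : Integrable φ)
    (hnonneg : ∀ t, 0 ≤ φ t) (hanti : ∀ ⦃s t : ℝ⦄, |s| ≤ |t| → φ t ≤ φ s) (a b : ℝ) :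
    IntegrableOn (fun r ↦ φ (a * r - b / r) * (a + b / r ^ 2)) (Ioi 0) := by
  have heven : Function.Even φ := fun t ↦
    le_antisymm (hanti (abs_neg t).ge) (hanti (abs_neg t).le)
  have hmeas : Measurable fun r ↦ φ (a * r - b / r) * (a + b / r ^ 2) :=
    (hcont.measurable.comp (by fun_prop)).mul (by fun_prop)
  -- The substitution with coefficients `|a|` and `|b|` is increasing and stays closer to `0`.
  refine (integrableOn_comp_mul_sub_div_of_nonneg hcont hint heven hnonneg
    (abs_nonneg a) (abs_nonneg b)).mono' hmeas.aestronglyMeasurable ?_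
  filter_upwards [ae_restrict_mem measurableSet_Ioi] with r hr
  rw [norm_mul, Real.norm_of_nonneg (hnonneg _), Real.norm_eq_abs]
  have hderiv : |a + b / r ^ 2| ≤ |a| + |b| / r ^ 2 :=
    (abs_add_le _ _).trans_eq (by rw [abs_div, abs_of_nonneg (sq_nonneg r)])
  exact mul_le_mul (hanti (abs_abs_mul_sub_abs_div_le a b hr)) hderiv (abs_nonneg _) (hnonneg _)

lemma integral_comp_mul_sub_div (hcont : Continuous φ) (hint : Integrable φ)
    (heven : Function.Even φ) {a b : ℝ}
    (hcomp : IntegrableOn (fun r ↦ φ (a * r - b / r) * (a + b / r ^ 2)) (Ioi 0)) :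
    ∫ r in Ioi 0, φ (a * r - b / r) * (a + b / r ^ 2)
      = 1 / 2 * (sign b + sign a) * ∫ t, φ t := by
  rw [integral_Ioi_of_hasDerivAt_of_tendsto_nhdsGT
    (fun _ hr ↦ hasDerivAt_intervalIntegral_mul_sub_div hcont a b (ne_of_gt hr)) hcomp
    (tendsto_intervalIntegral_mul_sub_div_nhdsGT_zero hcont hint heven a b)
    (tendsto_intervalIntegral_mul_sub_div_atTop hcont hint heven a b)]
  ring

end CauchySchlomilch

section OneAddSqRpow

variable {s : ℝ}

lemma continuous_one_add_sq_rpow (p : ℝ) : Continuous fun t : ℝ ↦ (1 + t ^ 2) ^ p :=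
  Continuous.rpow_const (by fun_prop) fun _ ↦ Or.inl (by positivity)

lemma even_one_add_sq_rpow (p : ℝ) : Function.Even fun t : ℝ ↦ (1 + t ^ 2) ^ p :=
  fun t ↦ by simp only [neg_sq]

lemma one_add_sq_rpow_neg_le_of_abs_le (hs : 0 ≤ s) ⦃t u : ℝ⦄ (htu : |t| ≤ |u|) :
    (1 + u ^ 2) ^ (-s) ≤ (1 + t ^ 2) ^ (-s) :=
  Real.rpow_le_rpow_of_nonpos (by positivity)
    (add_le_add_right (sq_le_sq.2 htu) 1) (neg_nonpos.2 hs)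

lemma integrable_one_add_sq_rpow_neg (hs : 1 / 2 < s) :
    Integrable fun t : ℝ ↦ (1 + t ^ 2) ^ (-s) := by
  have hfinrank : (finrank ℝ ℝ : ℝ) < 2 * s := by rw [finrank_self]; push_cast; linarith
  simpa [neg_div] using integrable_rpow_neg_one_add_norm_sq (μ := volume) hfinrank

lemma exp_neg_one_add_sq_mul (t x : ℝ) :
    Real.exp (-((1 + t ^ 2) * x)) = Real.exp (-x) * Real.exp (-x * t ^ 2) := by
  rw [← Real.exp_add]
  ring_nf

lemma integral_rpow_mul_exp_neg_one_add_sq_mul (s : ℝ) {x : ℝ} (hx : 0 < x) :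
    ∫ t : ℝ, x ^ (s - 1) * Real.exp (-((1 + t ^ 2) * x))
      = √π * (Real.exp (-x) * x ^ (s - 1 / 2 - 1)) := by
  have hpow : x ^ (s - 1) = x ^ (s - 1 / 2 - 1) * √x := by
    rw [Real.sqrt_eq_rpow, ← Real.rpow_add hx]
    ring_nf
  simp only [exp_neg_one_add_sq_mul]
  rw [integral_const_mul, integral_const_mul, integral_gaussian, Real.sqrt_div Real.pi_pos.le, hpow]
  field_simp

lemma integrable_rpow_mul_exp_neg_one_add_sq_mul (hs : 1 / 2 < s) :
    Integrable (Function.uncurry fun x t : ℝ ↦ x ^ (s - 1) * Real.exp (-((1 + t ^ 2) * x)))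
      ((volume.restrict (Ioi 0)).prod volume) := by
  refine (integrable_prod_iff (by fun_prop)).2 ⟨?_, ?_⟩
  · filter_upwards [ae_restrict_mem measurableSet_Ioi] with x hx
    simp only [Function.uncurry, exp_neg_one_add_sq_mul]
    exact ((integrable_exp_neg_mul_sq hx).const_mul _).const_mul _
  · refine ((Real.GammaIntegral_convergent (sub_pos.2 hs)).const_mul √π).congr ?_
    filter_upwards [ae_restrict_mem measurableSet_Ioi] with x hx
    rw [← integral_rpow_mul_exp_neg_one_add_sq_mul s hx]
    refine integral_congr_ae (.of_forall fun t ↦ (Real.norm_of_nonneg ?_).symm)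
    exact mul_nonneg (Real.rpow_nonneg (le_of_lt hx) _) (Real.exp_nonneg _)

lemma integral_one_add_sq_rpow_neg (hs : 1 / 2 < s) :
    ∫ t : ℝ, (1 + t ^ 2) ^ (-s) = √π * Gamma (s - 1 / 2) / Gamma s := by
  have hs0 : 0 < s := by linarith
  rw [eq_div_iff (Real.Gamma_pos_of_pos hs0).ne']
  calc (∫ t : ℝ, (1 + t ^ 2) ^ (-s)) * Gamma s
      = ∫ t : ℝ, ∫ x in Ioi 0, x ^ (s - 1) * Real.exp (-((1 + t ^ 2) * x)) := by
        rw [← integral_mul_const]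
        congr with t
        rw [Real.integral_rpow_mul_exp_neg_mul_Ioi hs0 (by positivity), one_div,
          Real.inv_rpow (by positivity), Real.rpow_neg (by positivity)]
    _ = ∫ x in Ioi 0, ∫ t : ℝ, x ^ (s - 1) * Real.exp (-((1 + t ^ 2) * x)) :=
        (integral_integral_swap (integrable_rpow_mul_exp_neg_one_add_sq_mul hs)).symm
    _ = ∫ x in Ioi 0, √π * (Real.exp (-x) * x ^ (s - 1 / 2 - 1)) :=
        setIntegral_congr_fun measurableSet_Ioi fun _ hx ↦
          integral_rpow_mul_exp_neg_one_add_sq_mul s hx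
    _ = √π * Gamma (s - 1 / 2) := by
        rw [integral_const_mul, Real.Gamma_eq_integral (by linarith)]

end OneAddSqRpow

/-- The surface area `2π^{x/2}/Γ(x/2)` of the unit sphere of `ℝˣ`. The dimension `x` of the ambient
space is a real number, so that it can be a cast of `finrank ℝ E` or of its successor. -/
noncomputable def unitSphereArea (x : ℝ) : ℝ := 2 * π ^ (x / 2) / Gamma (x / 2)

lemma unitSphereArea_pos {x : ℝ} (hx : 0 < x) : 0 < unitSphereArea x :=
  div_pos (by positivity) (Real.Gamma_pos_of_pos (half_pos hx))

-- Central projection maps the cylinder `Sˣ⁻¹ × ℝ` onto `Sˣ` minus its poles; the integrand is its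
-- Jacobian.
lemma unitSphereArea_mul_integral_one_add_sq_rpow {x : ℝ} (hx : 0 < x) :
    unitSphereArea x * ∫ t : ℝ, (1 + t ^ 2) ^ (-((x + 1) / 2)) = unitSphereArea (x + 1) := by
  have hGamma : Gamma (x / 2) ≠ 0 := (Real.Gamma_pos_of_pos (half_pos hx)).ne'
  have hpi : π ^ ((x + 1) / 2) = π ^ (x / 2) * √π := by
    rw [Real.sqrt_eq_rpow, ← Real.rpow_add Real.pi_pos, add_div]
  rw [integral_one_add_sq_rpow_neg (by linarith), show (x + 1) / 2 - 1 / 2 = x / 2 by ring,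
    unitSphereArea, unitSphereArea, hpi]
  field_simp

section DegreeDensity

/-- The degree density `(m + ηr²)/(r² + (m - ηr²)²)^{(x+1)/2}` of the map `k ↦ h(k)/|h(k)|`, where
`h(k) = (k, m - η|k|²)`, as a function of the radius `r = |k|`. As in `unitSphereArea`, the
dimension `x` of the domain is a real number. -/
noncomputable def degreeDensity (x m η r : ℝ) : ℝ :=
  (m + η * r ^ 2) / (r ^ 2 + (m - η * r ^ 2) ^ 2) ^ ((x + 1) / 2)

variable {x : ℝ}

lemma rpow_mul_degreeDensity (x m η : ℝ) {r : ℝ} (hr : 0 < r) :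
    r ^ (x - 1) * degreeDensity x m η r
      = (1 + (η * r - m / r) ^ 2) ^ (-((x + 1) / 2)) * (η + m / r ^ 2) := by
  have hnormSq : r ^ 2 + (m - η * r ^ 2) ^ 2 = r ^ 2 * (1 + (η * r - m / r) ^ 2) := by
    field_simp
    ring
  have hpow : r ^ (x - 1) = (r ^ 2) ^ ((x + 1) / 2) / r ^ 2 := by
    rw [← Real.rpow_two, ← Real.rpow_mul hr.le, ← Real.rpow_sub hr]
    ring_nf
  rw [degreeDensity, hnormSq, Real.mul_rpow (by positivity) (by positivity), hpow,
    Real.rpow_neg (by positivity)]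
  field_simp
  ring

lemma integrableOn_rpow_mul_degreeDensity (hx : 0 < x) (m η : ℝ) :
    IntegrableOn (fun r ↦ r ^ (x - 1) * degreeDensity x m η r) (Ioi 0) := by
  have hsubst := integrableOn_comp_mul_sub_div (continuous_one_add_sq_rpow (-((x + 1) / 2)))
    (integrable_one_add_sq_rpow_neg (by linarith)) (fun t ↦ by positivity)
    (one_add_sq_rpow_neg_le_of_abs_le (by positivity)) η m
  exact hsubst.congr_fun (fun r hr ↦ (rpow_mul_degreeDensity x m η hr).symm) measurableSet_Ioi

lemma integral_rpow_mul_degreeDensity (hx : 0 < x) (m η : ℝ) :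
    ∫ r in Ioi 0, r ^ (x - 1) * degreeDensity x m η r
      = 1 / 2 * (sign m + sign η) * ∫ t : ℝ, (1 + t ^ 2) ^ (-((x + 1) / 2)) := by
  have hradial : EqOn (fun r ↦ r ^ (x - 1) * degreeDensity x m η r)
      (fun r ↦ (1 + (η * r - m / r) ^ 2) ^ (-((x + 1) / 2)) * (η + m / r ^ 2)) (Ioi 0) :=
    fun r hr ↦ rpow_mul_degreeDensity x m η hr
  rw [setIntegral_congr_fun measurableSet_Ioi hradial]
  exact integral_comp_mul_sub_div (continuous_one_add_sq_rpow _)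
    (integrable_one_add_sq_rpow_neg (by linarith)) (even_one_add_sq_rpow _)
    ((integrableOn_rpow_mul_degreeDensity hx m η).congr_fun hradial measurableSet_Ioi)

end DegreeDensity

section PolarCoordinates

lemma pow_sub_one_eq_rpow {n : ℕ} (hn : 1 ≤ n) (r : ℝ) : r ^ (n - 1) = r ^ ((n : ℝ) - 1) := by
  rw [← Real.rpow_natCast, Nat.cast_sub hn, Nat.cast_one]

lemma integrable_fun_norm_iff_integrableOn_rpow {E F : Type*} [NormedAddCommGroup E]
    [NormedSpace ℝ E] [FiniteDimensional ℝ E] [Nontrivial E] [MeasurableSpace E] [BorelSpace E]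
    [NormedAddCommGroup F] [NormedSpace ℝ F] {μ : Measure E} [μ.IsAddHaarMeasure] {f : ℝ → F} :
    Integrable (fun k : E ↦ f ‖k‖) μ ↔
      IntegrableOn (fun r ↦ r ^ ((finrank ℝ E : ℝ) - 1) • f r) (Ioi 0) := by
  simp only [integrable_fun_norm_addHaar, pow_sub_one_eq_rpow finrank_pos]

variable {E F : Type*} [NormedAddCommGroup E] [InnerProductSpace ℝ E] [FiniteDimensional ℝ E]
  [Nontrivial E] [MeasurableSpace E] [BorelSpace E] [NormedAddCommGroup F] [NormedSpace ℝ F]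

lemma finrank_mul_volume_real_ball :
    finrank ℝ E * volume.real (Metric.ball (0 : E) 1) = unitSphereArea (finrank ℝ E) := by
  have hdim : (0 : ℝ) < finrank ℝ E := mod_cast finrank_pos
  have hpi : π ^ ((finrank ℝ E : ℝ) / 2) = √π ^ finrank ℝ E := by
    rw [Real.sqrt_eq_rpow, ← Real.rpow_mul_natCast Real.pi_pos.le, one_div_mul_eq_div]
  rw [Measure.real, InnerProductSpace.volume_ball, ENNReal.ofReal_one, one_pow, one_mul,
    Real.Gamma_add_one (by positivity), ENNReal.toReal_ofReal (by positivity), unitSphereArea, hpi]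
  field_simp

lemma integral_fun_norm_eq_unitSphereArea_smul (f : ℝ → F) :
    ∫ k : E, f ‖k‖ = unitSphereArea (finrank ℝ E) •
      ∫ r in Ioi 0, r ^ ((finrank ℝ E : ℝ) - 1) • f r := by
  rw [integral_fun_norm_addHaar, ← finrank_mul_volume_real_ball, mul_smul, Nat.cast_smul_eq_nsmul]
  simp only [pow_sub_one_eq_rpow finrank_pos]

end PolarCoordinates

theorem degree_integral_dim_d_general {E : Type*} [NormedAddCommGroup E] [InnerProductSpace ℝ E]
    [FiniteDimensional ℝ E] [Nontrivial E] [MeasurableSpace E] [BorelSpace E] (m η : ℝ) :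
    Integrable (fun k : E =>
      (m + η * ‖k‖ ^ 2) /
        (‖k‖ ^ 2 + (m - η * ‖k‖ ^ 2) ^ 2) ^ (((finrank ℝ E : ℝ) + 1) / 2)) ∧
    (1 / (2 * π ^ (((finrank ℝ E : ℝ) + 1) / 2) / Gamma (((finrank ℝ E : ℝ) + 1) / 2))) *
      ∫ k : E, (m + η * ‖k‖ ^ 2) /
        (‖k‖ ^ 2 + (m - η * ‖k‖ ^ 2) ^ 2) ^ (((finrank ℝ E : ℝ) + 1) / 2)
    = (1 / 2) * (sign m + sign η) := by
  have hdim : (0 : ℝ) < finrank ℝ E := mod_cast finrank_pos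
  have hintegral : ∫ k : E, degreeDensity (finrank ℝ E) m η ‖k‖
      = unitSphereArea (finrank ℝ E + 1) * (1 / 2 * (sign m + sign η)) := by
    simp only [integral_fun_norm_eq_unitSphereArea_smul, smul_eq_mul]
    rw [integral_rpow_mul_degreeDensity hdim, mul_left_comm,
      unitSphereArea_mul_integral_one_add_sq_rpow hdim, mul_comm]
  refine ⟨integrable_fun_norm_iff_integrableOn_rpow.2
    (integrableOn_rpow_mul_degreeDensity hdim m η), ?_⟩
  change 1 / unitSphereArea (finrank ℝ E + 1) *
    ∫ k : E, degreeDensity (finrank ℝ E) m η ‖k‖ = 1 / 2 * (sign m + sign η)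
  rw [hintegral, one_div, inv_mul_cancel_left₀ (unitSphereArea_pos (by positivity)).ne']

/-- The bulk topological index of the regularized Dirac Hamiltonian in dimension `d`:
the function `k ↦ (m + η|k|²)/(|k|² + (m − η|k|²)²)^{(d+1)/2}` is integrable on `ℝ^d` and
`(1/A_d) ∫_{ℝ^d} (m + η|k|²)/(|k|² + (m − η|k|²)²)^{(d+1)/2} dk = (1/2)(sgn m + sgn η)`,
where `A_d = 2π^{(d+1)/2}/Γ((d+1)/2)` is the volume of the unit sphere `Sᵈ ⊂ ℝ^{d+1}`. -/
theorem degree_integral_dim_d (d : ℕ) (hd : 1 ≤ d) (m η : ℝ) (hm : m ≠ 0) (hη : η ≠ 0) :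
    Integrable (fun k : EuclideanSpace ℝ (Fin d) =>
      (m + η * ‖k‖ ^ 2) / (‖k‖ ^ 2 + (m - η * ‖k‖ ^ 2) ^ 2) ^ (((d : ℝ) + 1) / 2)) ∧
    (1 / (2 * Real.pi ^ (((d : ℝ) + 1) / 2) / Real.Gamma (((d : ℝ) + 1) / 2))) *
      ∫ k : EuclideanSpace ℝ (Fin d),
        (m + η * ‖k‖ ^ 2) / (‖k‖ ^ 2 + (m - η * ‖k‖ ^ 2) ^ 2) ^ (((d : ℝ) + 1) / 2)
    = (1 / 2) * (Real.sign m + Real.sign η) := by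
  have : Nonempty (Fin d) := ⟨⟨0, hd⟩⟩
  simpa only [finrank_euclideanSpace_fin] using
    degree_integral_dim_d_general (E := EuclideanSpace ℝ (Fin d)) m η
end

section
/- Let d = 2κ+1 be odd and let γ_d¹, …, γ_d^{d+1} be the Dirac matrices of size 2^{κ+1} given by the recursive construction, with chiral matrix γ₀ = γ_d^{d+2} = σ₃ ⊗ I_{2^κ}. Let h : ℝ^d → ℝ^{d+1} be nonvanishing and differentiable at a point k, let H(k') = Σ_{j=1}^{d+1} h_j(k') γ_d^j and F(k') = H(k')/|h(k')|. Let L(k) be the (d+1)×(d+1) real matrix whose first row is h(k) and whose (j+1)-th row is the partial derivative ∂h/∂k_j(k), 1 ≤ j ≤ d. Then Σ_{ρ ∈ S_d} sgn(ρ) · trace( γ₀ · F(k) · ∂_{ρ(1)}F(k) · ⋯ · ∂_{ρ(d)}F(k) ) = (2i)^{(d+1)/2} · d! · det(L(k)) / |h(k)|^{d+1}. -/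
open Matrix

/-- Pauli matrix σ₁. -/
noncomputable def pauli1 : Matrix (Fin 2) (Fin 2) ℂ := !![0, 1; 1, 0]

/-- Pauli matrix σ₂. -/
noncomputable def pauli2 : Matrix (Fin 2) (Fin 2) ℂ := !![0, -Complex.I; Complex.I, 0]

/-- Pauli matrix σ₃. -/
noncomputable def pauli3 : Matrix (Fin 2) (Fin 2) ℂ := !![1, 0; 0, -1]

/-- Re-index a square matrix along an equality of dimensions. -/
noncomputable def castSq {m n : ℕ} (h : m = n) (A : Matrix (Fin m) (Fin m) ℂ) :
    Matrix (Fin n) (Fin n) ℂ :=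
  Matrix.reindex (finCongr h) (finCongr h) A

/-- Kronecker product of a 2×2 matrix with an n×n matrix, with indices flattened. -/
noncomputable def kron2 {n : ℕ} (A : Matrix (Fin 2) (Fin 2) ℂ) (B : Matrix (Fin n) (Fin n) ℂ) :
    Matrix (Fin (2 * n)) (Fin (2 * n)) ℂ :=
  Matrix.reindex finProdFinEquiv finProdFinEquiv (Matrix.kroneckerMap (· * ·) A B)

/-- The recursively constructed Dirac matrices: `diracGamma κ j` is the `j`-th Dirac matrix
(1-indexed, `1 ≤ j ≤ 2κ+1`) of size `2^κ`. For κ = 1 these are the Pauli matrices; the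
recursion is `γ_{d+2}^j = σ₁ ⊗ γ_d^j` (`1 ≤ j ≤ d+1`), `γ_{d+2}^{d+2} = σ₂ ⊗ I`,
`γ_{d+2}^{d+3} = σ₃ ⊗ I` for `d = 2κ`. -/
noncomputable def diracGamma : (κ : ℕ) → ℕ → Matrix (Fin (2 ^ κ)) (Fin (2 ^ κ)) ℂ
  | 0, _ => 1
  | 1, j => castSq (by norm_num)
      (if j = 1 then pauli1 else if j = 2 then pauli2 else if j = 3 then pauli3 else 1)
  | (κ + 2), j => castSq (by rw [pow_succ]; ring)
      (if j ≤ 2 * (κ + 1) + 1 then kron2 pauli1 (diracGamma (κ + 1) j)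
       else if j = 2 * (κ + 1) + 2 then kron2 pauli2 1
       else if j = 2 * (κ + 1) + 3 then kron2 pauli3 1
       else 1)

attribute [local instance] Matrix.normedAddCommGroup Matrix.normedSpace

/-!
Let `γ₀, γ₁, …, γₙ` with `n = d + 1` even be pairwise anticommuting square roots of `1`. The form
`(v₁, …, vₙ) ↦ tr (γ₀ H(v₁) ⋯ H(vₙ))`, where `H(v) = ∑ⱼ vⱼ γⱼ`, is multilinear and so is determined
by its values on tuples of basis vectors. On a permutation of the basis it is the sign times
`tr (γ₁ ⋯ γₙ γ₀)`. On any other tuple some `γⱼ` with `j ≥ 1` is missing; it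
anticommutes with each of the `n + 1` factors, hence, `n + 1` being odd, with the whole product,
whose trace therefore vanishes. So the form is `det` times `tr (γ₁ ⋯ γₙ γ₀)`, and each of the `d!`
terms of the signed sum contributes the same determinant.

The derivative of `h / |h|` differs from `∂h / |h|` by a multiple of `h`, which does not change the
determinant. Finally `σ₁ σ₂ σ₃ = i` and the Kronecker recursion give
`γ₁ ⋯ γₙ γ₀ = i ^ ((d + 1) / 2)`.
-/

section Anticommuting

variable {A : Type*} [Ring A]

theorem prod_ofFn_comp_swap_of_anticomm {n : ℕ} {b : Fin (n + 1) → A}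
    (hb : Pairwise fun i j => b i * b j = -(b j * b i)) (i : Fin n) :
    (List.ofFn (b ∘ Equiv.swap i.castSucc i.succ)).prod = -(List.ofFn b).prod := by
  induction n with
  | zero => exact i.elim0
  | succ n ih =>
    cases i using Fin.cases with
    | zero =>
      have fixes_tail (l : Fin n) : Equiv.swap (0 : Fin (n + 2)) 1 l.succ.succ = l.succ.succ :=
        Equiv.swap_apply_of_ne_of_ne (Fin.succ_ne_zero _)
          fun h => Fin.succ_ne_zero l (Fin.succ_injective _ h)
      have hb01 : b 1 * b 0 = -(b 0 * b 1) := hb (by simp)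
      simp only [List.ofFn_succ, List.prod_cons, Function.comp_apply, Fin.castSucc_zero,
        Fin.succ_zero_eq_one, fixes_tail, Equiv.swap_apply_left, Equiv.swap_apply_right,
        ← mul_assoc, hb01, neg_mul]
    | succ i =>
      have fixes_head : Equiv.swap i.succ.castSucc i.succ.succ (0 : Fin (n + 2)) = 0 :=
        Equiv.swap_apply_of_ne_of_ne (by simp [Fin.ext_iff]) (Fin.succ_ne_zero _).symm
      have on_tail (l : Fin (n + 1)) : Equiv.swap i.succ.castSucc i.succ.succ l.succ =
          (Equiv.swap i.castSucc i.succ l).succ :=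
        (Fin.succ_injective (n + 1)).swap_apply i.castSucc i.succ l
      have ih_tail := ih (b := fun l => b l.succ) (fun _ _ hij => hb (by simpa using hij)) i
      simp only [Function.comp_def] at ih_tail
      rw [List.ofFn_succ, List.ofFn_succ (f := b)]
      simp only [List.prod_cons, Function.comp_apply, fixes_head, on_tail, ih_tail, mul_neg]

theorem prod_ofFn_comp_perm_of_anticomm {n : ℕ} {b : Fin n → A}
    (hb : Pairwise fun i j => b i * b j = -(b j * b i)) (σ : Equiv.Perm (Fin n)) :
    (List.ofFn (b ∘ σ)).prod = Equiv.Perm.sign σ • (List.ofFn b).prod := by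
  cases n with
  | zero => simp [Subsingleton.elim σ 1]
  | succ n =>
    have hσ : σ ∈ Submonoid.closure (Set.range fun i : Fin n => Equiv.swap i.castSucc i.succ) := by
      rw [Equiv.Perm.mclosure_swap_castSucc_succ]
      trivial
    induction hσ using Submonoid.closure_induction_right with
    | one => simp
    | mul_right τ _ s hs ih =>
      obtain ⟨i, rfl⟩ := hs
      have hbτ : Pairwise fun l m => (b ∘ τ) l * (b ∘ τ) m = -((b ∘ τ) m * (b ∘ τ) l) :=
        fun _ _ hlm => hb (τ.injective.ne hlm)
      rw [Equiv.Perm.coe_mul, ← Function.comp_assoc, prod_ofFn_comp_swap_of_anticomm hbτ, ih,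
        Equiv.Perm.sign_mul, Equiv.Perm.sign_swap Fin.castSucc_lt_succ.ne, mul_neg_one]
      simp [Units.smul_def]

theorem mul_list_prod_of_forall_anticomm {g : A} {l : List A}
    (hl : ∀ x ∈ l, g * x = -(x * g)) : g * l.prod = (-1) ^ l.length * l.prod * g := by
  induction l with
  | nil => simp
  | cons a l ih =>
    have hga : g * a = -(a * g) := hl a List.mem_cons_self
    have hgl := ih fun x hx => hl x (List.mem_cons_of_mem _ hx)
    have sign_comm : Commute a ((-1 : A) ^ l.length) := (Commute.neg_one_right a).pow_right _
    calc g * (a :: l).prod = -(a * (g * l.prod)) := by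
          rw [List.prod_cons, ← mul_assoc, hga, neg_mul, mul_assoc]
      _ = -(a * (-1) ^ l.length * (l.prod * g)) := by rw [hgl]; simp only [mul_assoc]
      _ = (-1) ^ (a :: l).length * (a :: l).prod * g := by
          rw [sign_comm.eq, List.length_cons, List.prod_cons, pow_succ]
          simp only [mul_assoc, mul_neg, neg_mul, one_mul]

end Anticommuting

theorem trace_eq_zero_of_anticomm {m S : Type*} [Fintype m] [DecidableEq m] [CommRing S]
    [IsAddTorsionFree S] {g X : Matrix m m S} (hg : g * g = 1) (hgX : g * X = -(X * g)) :
    X.trace = 0 := by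
  refine self_eq_neg.mp ?_
  calc X.trace = (g * (g * X)).trace := by rw [← mul_assoc, hg, one_mul]
    _ = -(X * (g * g)).trace := by
      rw [hgX, mul_neg, Matrix.trace_neg, Matrix.trace_mul_comm, mul_assoc]
    _ = -X.trace := by rw [hg, mul_one]

/-- The Hamiltonian `∑ j, h j • γ j` with coefficient vector `h`. The last member of `γ` is left
out: it plays the role of the chiral matrix. -/
def diracHamiltonian (R : Type*) {A : Type*} [Semiring R] [AddCommMonoid A] [Module R A]
    {n : ℕ} (γ : Fin (n + 1) → A) : (Fin n → R) →ₗ[R] A :=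
  Fintype.linearCombination R fun j : Fin n => γ j.castSucc

/-- A family of square roots of `1` that pairwise anticommute: generators of a representation of
the Clifford algebra of the standard Euclidean form. -/
structure IsCliffordFamily {ι A : Type*} [Ring A] (γ : ι → A) : Prop where
  mul_self : ∀ i, γ i * γ i = 1
  anticomm : Pairwise fun i j => γ i * γ j = -(γ j * γ i)

namespace IsCliffordFamily

section Ring

variable {ι A B : Type*} [Ring A] [Ring B]

theorem map {γ : ι → A} (hγ : IsCliffordFamily γ) (f : A →+* B) :
    IsCliffordFamily fun i => f (γ i) where
  mul_self i := by rw [← map_mul, hγ.mul_self, map_one]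
  anticomm i j hij := by
    simp only [← map_mul, ← map_neg]
    rw [hγ.anticomm hij]

theorem snoc {n : ℕ} {γ : Fin n → A} (hγ : IsCliffordFamily γ) {g : A} (hg : g * g = 1)
    (hγg : ∀ i, γ i * g = -(g * γ i)) :
    IsCliffordFamily (Fin.snoc (α := fun _ => A) γ g) where
  mul_self i := by
    cases i using Fin.lastCases with
    | last => simpa using hg
    | cast i => simpa using hγ.mul_self i
  anticomm i j hij := by
    cases i using Fin.lastCases with
    | last =>
      cases j using Fin.lastCases with
      | last => exact absurd rfl hij
      | cast j => simp [hγg j]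
    | cast i =>
      cases j using Fin.lastCases with
      | last => simpa using hγg i
      | cast j => simpa using hγ.anticomm (ne_of_apply_ne Fin.castSucc hij)

end Ring

section Trace

variable {m S : Type*} [Fintype m] [DecidableEq m] [CommRing S]
variable {n : ℕ} {γ : Fin (n + 1) → Matrix m m S}

theorem trace_last_mul_prod_perm (hγ : IsCliffordFamily γ) (σ : Equiv.Perm (Fin n)) :
    (γ (Fin.last n) * (List.ofFn fun i => γ (σ i).castSucc).prod).trace =
      Equiv.Perm.sign σ • (List.ofFn γ).prod.trace := by
  have hγ_castSucc : Pairwise fun i j : Fin n => γ i.castSucc * γ j.castSucc =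
      -(γ j.castSucc * γ i.castSucc) :=
    fun _ _ hij => hγ.anticomm ((Fin.castSucc_injective n).ne hij)
  have reorder := prod_ofFn_comp_perm_of_anticomm hγ_castSucc σ
  simp only [Function.comp_def] at reorder
  rw [reorder, mul_smul_comm, Matrix.trace_smul, Matrix.trace_mul_comm, List.ofFn_succ',
    List.prod_concat]

-- A generator missing from the product anticommutes with each of its `n + 1` factors.
theorem trace_last_mul_prod_eq_zero [IsAddTorsionFree S] (hγ : IsCliffordFamily γ) (hn : Even n)
    {u : Fin n → Fin n} (hu : ¬ Function.Surjective u) :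
    (γ (Fin.last n) * (List.ofFn fun i => γ (u i).castSucc).prod).trace = 0 := by
  obtain ⟨j, hj⟩ : ∃ j, ∀ i, u i ≠ j := by simpa [Function.Surjective] using hu
  have anticomm_factors : ∀ x ∈ γ (Fin.last n) :: List.ofFn fun i => γ (u i).castSucc,
      γ j.castSucc * x = -(x * γ j.castSucc) := by
    simp only [List.mem_cons, List.mem_ofFn', Set.mem_range]
    rintro x (rfl | ⟨i, rfl⟩)
    · exact hγ.anticomm (Fin.castSucc_lt_last j).ne
    · exact hγ.anticomm ((Fin.castSucc_injective n).ne (hj i).symm)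
  have anticomm_prod := mul_list_prod_of_forall_anticomm anticomm_factors
  rw [List.prod_cons, List.length_cons, List.length_ofFn, hn.add_one.neg_one_pow, neg_one_mul,
    neg_mul] at anticomm_prod
  exact trace_eq_zero_of_anticomm (hγ.mul_self _) anticomm_prod

variable (R : Type*) [CommRing R] [Algebra R S] [IsAddTorsionFree S]

theorem trace_last_mul_prod_eq_det_single (hγ : IsCliffordFamily γ) (hn : Even n)
    (u : Fin n → Fin n) :
    (γ (Fin.last n) * (List.ofFn fun i => γ (u i).castSucc).prod).trace =
      (Matrix.of fun i => (Pi.single (u i) 1 : Fin n → R)).det • (List.ofFn γ).prod.trace := by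
  by_cases hu : Function.Bijective u
  · obtain ⟨σ, rfl⟩ : ∃ σ : Equiv.Perm (Fin n), ⇑σ = u := ⟨Equiv.ofBijective u hu, rfl⟩
    have rows : (Matrix.of fun i => (Pi.single (σ i) 1 : Fin n → R)) =
        (1 : Matrix (Fin n) (Fin n) R).submatrix σ id := by
      ext i j
      exact Matrix.one_eq_pi_single.symm
    rw [hγ.trace_last_mul_prod_perm, rows, Matrix.det_permute, Matrix.det_one, mul_one,
      Units.smul_def, Int.cast_smul_eq_zsmul]
  · obtain ⟨i, j, hij, hne⟩ : ∃ i j, u i = u j ∧ i ≠ j := by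
      simpa [Function.Injective] using mt Finite.injective_iff_bijective.mp hu
    rw [hγ.trace_last_mul_prod_eq_zero hn (mt Finite.surjective_iff_bijective.mp hu),
      Matrix.det_zero_of_row_eq hne (congrArg (Pi.single · 1) hij), zero_smul]

theorem trace_last_mul_prod_diracHamiltonian (hγ : IsCliffordFamily γ) (hn : Even n)
    (V : Matrix (Fin n) (Fin n) R) :
    (γ (Fin.last n) * (List.ofFn fun i => diracHamiltonian R γ (V i)).prod).trace =
      V.det • (List.ofFn γ).prod.trace := by
  let traceForm : MultilinearMap R (fun _ : Fin n => Fin n → R) S :=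
    (Matrix.traceLinearMap m R S ∘ₗ LinearMap.mulLeft R (γ (Fin.last n))).compMultilinearMap
      ((MultilinearMap.mkPiAlgebraFin R n (Matrix m m S)).compLinearMap
        fun _ => diracHamiltonian R γ)
  let detForm : MultilinearMap R (fun _ : Fin n => Fin n → R) S :=
    (LinearMap.toSpanSingleton R S (List.ofFn γ).prod.trace).compMultilinearMap
      Matrix.detRowAlternating.toMultilinearMap
  suffices traceForm = detForm from congrArg (fun f => f V) this
  refine Module.Basis.ext_multilinear (fun _ => Pi.basisFun R (Fin n)) fun u => ?_
  have traceForm_basis : traceForm (fun i => Pi.basisFun R (Fin n) (u i)) =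
      (γ (Fin.last n) * (List.ofFn fun i => γ (u i).castSucc).prod).trace := by
    simp [traceForm, diracHamiltonian, Fintype.linearCombination_apply_single]
  have detForm_basis : detForm (fun i => Pi.basisFun R (Fin n) (u i)) =
      (Matrix.of fun i => (Pi.single (u i) 1 : Fin n → R)).det • (List.ofFn γ).prod.trace := by
    simp only [Pi.basisFun_apply]
    rfl
  rw [traceForm_basis, detForm_basis, hγ.trace_last_mul_prod_eq_det_single R hn]

end Trace

end IsCliffordFamily

section Determinant

variable {R : Type*} [CommRing R] {n : ℕ}

theorem det_cons_comp_perm (v : Fin (n + 1) → R) (w : Fin n → Fin (n + 1) → R)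
    (ρ : Equiv.Perm (Fin n)) :
    (Matrix.of (Fin.cons v (w ∘ ρ))).det =
      (Equiv.Perm.sign ρ : ℤ) * (Matrix.of (Fin.cons v w)).det := by
  have map_perm := (Matrix.detRowAlternating.curryLeft v).map_perm w ρ
  rwa [Units.smul_def, zsmul_eq_mul] at map_perm

theorem det_cons_smul_add (c : R) (v : Fin (n + 1) → R) (a : Fin n → R)
    (w : Fin n → Fin (n + 1) → R) :
    (Matrix.of (Fin.cons (c • v) fun i => c • w i + a i • v)).det =
      c ^ (n + 1) * (Matrix.of (Fin.cons v w)).det := by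
  have scale_head : (Matrix.of (Fin.cons (c • v) fun i => c • w i + a i • v)).det =
      c * (Matrix.of (Fin.cons v fun i => c • w i + a i • v)).det :=
    Matrix.detRowAlternating.map_vecCons_smul _ c v
  have clear_head : (Matrix.of (Fin.cons v fun i => c • w i + a i • v)).det =
      (Matrix.of (Fin.cons v fun i => c • w i)).det :=
    Matrix.det_eq_of_forall_row_eq_smul_add_const (Fin.cons 0 a) 0 rfl fun i j => by
      cases i using Fin.cases <;> simp
  have scale_tail : (Matrix.of (Fin.cons v fun i => c • w i)).det =
      c ^ n * (Matrix.of (Fin.cons v w)).det := by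
    have map_smul := (Matrix.detRowAlternating.curryLeft v).toMultilinearMap.map_smul_univ
      (fun _ => c) w
    rwa [Finset.prod_const, Finset.card_univ, Fintype.card_fin] at map_smul
  rw [scale_head, clear_head, scale_tail, pow_succ']
  ring

end Determinant

theorem exists_hasFDerivAt_norm_inv_smul {E V : Type*} [NormedAddCommGroup E] [NormedSpace ℝ E]
    [NormedAddCommGroup V] [InnerProductSpace ℝ V] {h : E → V} {k : E} (hk : h k ≠ 0)
    (hdiff : DifferentiableAt ℝ h k) :
    ∃ a : E →L[ℝ] ℝ, HasFDerivAt (fun x => ‖h x‖⁻¹ • h x)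
      (‖h k‖⁻¹ • fderiv ℝ h k + a.smulRight (h k)) k :=
  ⟨_, ((hdiff.norm ℝ hk).inv (norm_ne_zero_iff.mpr hk)).hasFDerivAt.fun_smul hdiff.hasFDerivAt⟩

section Flattened

variable {m : Type*} {n : ℕ} {E : Type*}

/-- The flattened Hamiltonian `F = H / |h|`, which division by zero makes `0` where `h` vanishes. -/
noncomputable def flattenedHamiltonian (γ : Fin (n + 1) → Matrix m m ℂ)
    (h : E → EuclideanSpace ℝ (Fin n)) (x : E) : Matrix m m ℂ :=
  ∑ j : Fin n, ((h x j / ‖h x‖ : ℝ) : ℂ) • γ j.castSucc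

variable (γ : Fin (n + 1) → Matrix m m ℂ)

theorem flattenedHamiltonian_eq (h : E → EuclideanSpace ℝ (Fin n)) (x : E) :
    flattenedHamiltonian γ h x = diracHamiltonian ℝ γ (‖h x‖⁻¹ • (h x).ofLp) :=
  Finset.sum_congr rfl fun j _ => by
    rw [div_eq_inv_mul, Complex.coe_smul]
    rfl

variable [Finite m] [NormedAddCommGroup E] [NormedSpace ℝ E]

theorem exists_fderiv_flattenedHamiltonian {h : E → EuclideanSpace ℝ (Fin n)} {k : E}
    (hk : h k ≠ 0) (hdiff : DifferentiableAt ℝ h k) :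
    ∃ a : E →L[ℝ] ℝ, ∀ e, fderiv ℝ (flattenedHamiltonian γ h) k e =
      diracHamiltonian ℝ γ (‖h k‖⁻¹ • (fderiv ℝ h k e).ofLp + a e • (h k).ofLp) := by
  have := Fintype.ofFinite m
  obtain ⟨a, ha⟩ := exists_hasFDerivAt_norm_inv_smul hk hdiff
  let hamiltonianL : EuclideanSpace ℝ (Fin n) →L[ℝ] Matrix m m ℂ :=
    (diracHamiltonian ℝ γ ∘ₗ (WithLp.linearEquiv 2 ℝ (Fin n → ℝ)).toLinearMap).toContinuousLinearMap
  have F_eq : flattenedHamiltonian γ h = hamiltonianL ∘ fun x => ‖h x‖⁻¹ • h x :=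
    funext (flattenedHamiltonian_eq γ h)
  have hasFDerivAt_F : HasFDerivAt (flattenedHamiltonian γ h)
      (hamiltonianL ∘L (‖h k‖⁻¹ • fderiv ℝ h k + a.smulRight (h k))) k :=
    F_eq ▸ hamiltonianL.hasFDerivAt.comp k ha
  exact ⟨a, fun e => by rw [hasFDerivAt_F.fderiv]; rfl⟩

end Flattened

namespace IsCliffordFamily

variable {m : Type*} [Fintype m] [DecidableEq m] {n : ℕ}

theorem sum_sign_mul_trace_diracHamiltonian {γ : Fin (n + 1 + 1) → Matrix m m ℂ}
    (hγ : IsCliffordFamily γ) (hn : Odd n) (v : Fin (n + 1) → ℝ) (w : Fin n → Fin (n + 1) → ℝ) :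
    ∑ ρ : Equiv.Perm (Fin n), ((Equiv.Perm.sign ρ : ℤ) : ℂ) *
      (γ (Fin.last (n + 1)) * (diracHamiltonian ℝ γ v *
        (List.ofFn fun i => diracHamiltonian ℝ γ (w (ρ i))).prod)).trace =
      n.factorial * (Matrix.of (Fin.cons v w)).det * (List.ofFn γ).prod.trace := by
  have trace_eq (ρ : Equiv.Perm (Fin n)) :
      (γ (Fin.last (n + 1)) * (diracHamiltonian ℝ γ v *
        (List.ofFn fun i => diracHamiltonian ℝ γ (w (ρ i))).prod)).trace =
      (Equiv.Perm.sign ρ : ℤ) * ((Matrix.of (Fin.cons v w)).det * (List.ofFn γ).prod.trace) := by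
    have trace_cons := hγ.trace_last_mul_prod_diracHamiltonian ℝ hn.add_one
      (Matrix.of (Fin.cons v (w ∘ ρ)))
    rw [List.ofFn_succ, List.prod_cons, det_cons_comp_perm, Complex.real_smul, Complex.ofReal_mul,
      Complex.ofReal_intCast, mul_assoc] at trace_cons
    exact trace_cons
  have sign_mul_self (ρ : Equiv.Perm (Fin n)) :
      ((Equiv.Perm.sign ρ : ℤ) : ℂ) * (Equiv.Perm.sign ρ : ℤ) = 1 := by
    rw [← Int.cast_mul, ← Units.val_mul, Int.units_mul_self, Units.val_one, Int.cast_one]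
  simp only [trace_eq]
  simp only [← mul_assoc, sign_mul_self, one_mul, Finset.sum_const, Finset.card_univ,
    Fintype.card_perm, Fintype.card_fin, nsmul_eq_mul]

-- Differentiating `‖h‖⁻¹` only adds multiples of `h k` to the rows, invisible to the determinant.
theorem sum_sign_mul_trace_flattenedHamiltonian {γ : Fin (n + 1 + 1) → Matrix m m ℂ}
    (hγ : IsCliffordFamily γ) (hn : Odd n) {E : Type*} [NormedAddCommGroup E] [NormedSpace ℝ E]
    {h : E → EuclideanSpace ℝ (Fin (n + 1))} {k : E} (hk : h k ≠ 0)
    (hdiff : DifferentiableAt ℝ h k) (v : Fin n → E) :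
    ∑ ρ : Equiv.Perm (Fin n), ((Equiv.Perm.sign ρ : ℤ) : ℂ) *
      (γ (Fin.last (n + 1)) * (flattenedHamiltonian γ h k *
        (List.ofFn fun i => fderiv ℝ (flattenedHamiltonian γ h) k (v (ρ i))).prod)).trace =
      (List.ofFn γ).prod.trace * n.factorial *
        (Matrix.of (Fin.cons (h k).ofLp fun j => (fderiv ℝ h k (v j)).ofLp)).det /
          (‖h k‖ : ℂ) ^ (n + 1) := by
  obtain ⟨a, ha⟩ := exists_fderiv_flattenedHamiltonian γ hk hdiff
  simp only [ha, flattenedHamiltonian_eq γ h k]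
  rw [hγ.sum_sign_mul_trace_diracHamiltonian hn (‖h k‖⁻¹ • (h k).ofLp)
    fun i => ‖h k‖⁻¹ • (fderiv ℝ h k (v i)).ofLp + a (v i) • (h k).ofLp, det_cons_smul_add]
  push_cast
  ring

end IsCliffordFamily

theorem prod_ofFn_snoc {M : Type*} [Monoid M] {n : ℕ} (b : Fin n → M) (x : M) :
    (List.ofFn (Fin.snoc (α := fun _ => M) b x)).prod = (List.ofFn b).prod * x := by
  simp only [List.ofFn_succ', Fin.snoc_castSucc, Fin.snoc_last, List.prod_concat]

section Kronecker

open scoped Kronecker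

variable {l m R : Type*} [Fintype l] [Fintype m] [DecidableEq m] [CommRing R]

theorem kronecker_mul_comm_neg {P Q : Matrix l l R} (hPQ : P * Q = -(Q * P)) (B : Matrix m m R) :
    P ⊗ₖ B * Q ⊗ₖ 1 = -(Q ⊗ₖ 1 * P ⊗ₖ B) := by
  simp only [← Matrix.mul_kronecker_mul, hPQ, mul_one, one_mul]
  rw [← neg_one_smul R, Matrix.smul_kronecker, neg_one_smul]

theorem prod_ofFn_kronecker [DecidableEq l] {n : ℕ} (P : Matrix l l R) (γ : Fin n → Matrix m m R) :
    (List.ofFn fun j => P ⊗ₖ γ j).prod = (P ^ n) ⊗ₖ (List.ofFn γ).prod := by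
  induction n with
  | zero => simp
  | succ n ih =>
    rw [List.ofFn_succ, List.ofFn_succ, List.prod_cons, List.prod_cons, ih,
      ← Matrix.mul_kronecker_mul, pow_succ']

end Kronecker

section Dirac

open scoped Kronecker

theorem pauli1_mul_self : pauli1 * pauli1 = 1 := by
  simp [pauli1, Matrix.one_fin_two]

theorem pauli2_mul_self : pauli2 * pauli2 = 1 := by
  simp [pauli2, Matrix.one_fin_two]

theorem pauli3_mul_self : pauli3 * pauli3 = 1 := by
  simp [pauli3, Matrix.one_fin_two]

theorem pauli1_mul_pauli2 : pauli1 * pauli2 = -(pauli2 * pauli1) := by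
  simp [pauli1, pauli2]

theorem pauli1_mul_pauli3 : pauli1 * pauli3 = -(pauli3 * pauli1) := by
  simp [pauli1, pauli3]

theorem pauli2_mul_pauli3 : pauli2 * pauli3 = -(pauli3 * pauli2) := by
  simp [pauli2, pauli3]

theorem pauli1_mul_pauli2_mul_pauli3 : pauli1 * pauli2 * pauli3 = Complex.I • 1 := by
  simp [pauli1, pauli2, pauli3, Matrix.one_fin_two]

variable {m : Type*} [DecidableEq m] {n : ℕ}

/-- One step of the recursive construction of the Dirac matrices:
`σ₁ ⊗ γ₁, …, σ₁ ⊗ γₙ, σ₂ ⊗ 1, σ₃ ⊗ 1`. -/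
noncomputable def pauliExtension (γ : Fin n → Matrix m m ℂ) :
    Fin (n + 2) → Matrix (Fin 2 × m) (Fin 2 × m) ℂ :=
  Fin.snoc (Fin.snoc (fun j => pauli1 ⊗ₖ γ j) (pauli2 ⊗ₖ 1)) (pauli3 ⊗ₖ 1)

variable [Fintype m] {γ : Fin n → Matrix m m ℂ}

theorem IsCliffordFamily.pauliExtension (hγ : IsCliffordFamily γ) :
    IsCliffordFamily (pauliExtension γ) := by
  have first : IsCliffordFamily fun j => pauli1 ⊗ₖ γ j :=
    { mul_self := fun j => by
        rw [← Matrix.mul_kronecker_mul, pauli1_mul_self, hγ.mul_self, Matrix.one_kronecker_one]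
      anticomm := fun i j hij => by
        beta_reduce
        rw [← Matrix.mul_kronecker_mul, ← Matrix.mul_kronecker_mul, hγ.anticomm hij,
          ← neg_one_smul ℂ, Matrix.kronecker_smul, neg_one_smul] }
  refine (first.snoc ?_ fun j => kronecker_mul_comm_neg pauli1_mul_pauli2 (γ j)).snoc ?_ fun i => ?_
  · rw [← Matrix.mul_kronecker_mul, pauli2_mul_self, mul_one, Matrix.one_kronecker_one]
  · rw [← Matrix.mul_kronecker_mul, pauli3_mul_self, mul_one, Matrix.one_kronecker_one]
  · cases i using Fin.lastCases with
    | last => simpa using kronecker_mul_comm_neg pauli2_mul_pauli3 (1 : Matrix m m ℂ)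
    | cast j => simpa using kronecker_mul_comm_neg pauli1_mul_pauli3 (γ j)

theorem prod_ofFn_pauliExtension (hn : Odd n) (γ : Fin n → Matrix m m ℂ) :
    (List.ofFn (pauliExtension γ)).prod = Complex.I • (1 ⊗ₖ (List.ofFn γ).prod) := by
  have pauli1_pow : pauli1 ^ n = pauli1 := by
    obtain ⟨l, rfl⟩ := hn
    rw [pow_succ, pow_mul, pow_two, pauli1_mul_self, one_pow, one_mul]
  rw [pauliExtension, prod_ofFn_snoc, prod_ofFn_snoc, prod_ofFn_kronecker, pauli1_pow,
    ← Matrix.mul_kronecker_mul, ← Matrix.mul_kronecker_mul, pauli1_mul_pauli2_mul_pauli3, mul_one,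
    mul_one, Matrix.smul_kronecker]

/-- The Dirac matrices of size `2 ^ κ`, indexed from `0`. -/
noncomputable def diracFamily (κ : ℕ) : Fin (2 * κ + 1) → Matrix (Fin (2 ^ κ)) (Fin (2 ^ κ)) ℂ :=
  fun j => diracGamma κ (j + 1)

/-- The algebra isomorphism induced by the flattening `Fin 2 × Fin (2 ^ κ) ≃ Fin (2 ^ (κ + 1))`
of the indices of a Kronecker product. -/
noncomputable def flattenKronecker (κ : ℕ) :
    Matrix (Fin 2 × Fin (2 ^ κ)) (Fin 2 × Fin (2 ^ κ)) ℂ ≃ₐ[ℂ]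
      Matrix (Fin (2 ^ (κ + 1))) (Fin (2 ^ (κ + 1))) ℂ :=
  Matrix.reindexAlgEquiv ℂ ℂ (finProdFinEquiv.trans (finCongr (pow_succ' 2 κ).symm))

theorem castSq_kron2 {κ : ℕ} (hκ : 2 * 2 ^ κ = 2 ^ (κ + 1)) (P : Matrix (Fin 2) (Fin 2) ℂ)
    (B : Matrix (Fin (2 ^ κ)) (Fin (2 ^ κ)) ℂ) :
    castSq hκ (kron2 P B) = flattenKronecker κ (P ⊗ₖ B) :=
  rfl

theorem castSq_eq_flattenKronecker (P : Matrix (Fin 2) (Fin 2) ℂ) :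
    castSq (pow_one 2).symm P = flattenKronecker 0 (P ⊗ₖ 1) := by
  ext i j
  have entry (a b : Fin 2) : P a b = P a b * (1 : Matrix (Fin (2 ^ 0)) (Fin (2 ^ 0)) ℂ) 0 0 := by
    rw [Matrix.one_apply_eq, mul_one]
  fin_cases i <;> fin_cases j <;> exact entry _ _

theorem diracFamily_succ (κ : ℕ) (j : Fin (2 * κ + 1 + 2)) :
    diracFamily (κ + 1) j = flattenKronecker κ (pauliExtension (diracFamily κ) j) := by
  cases κ with
  | zero =>
    fin_cases j <;> exact castSq_eq_flattenKronecker _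
  | succ κ =>
    cases j using Fin.lastCases with
    | last =>
      simp only [diracFamily, pauliExtension, Fin.snoc_last, diracGamma, Fin.val_last]
      rw [if_neg (by omega), if_neg (by omega), if_pos trivial, castSq_kron2]
    | cast j =>
      cases j using Fin.lastCases with
      | last =>
        simp only [diracFamily, pauliExtension, Fin.snoc_last, Fin.snoc_castSucc, diracGamma,
          Fin.val_last, Fin.val_castSucc]
        rw [if_neg (by omega), if_pos trivial, castSq_kron2]
      | cast j =>
        simp only [diracFamily, pauliExtension, Fin.snoc_castSucc, diracGamma, Fin.val_castSucc]
        rw [if_pos (by omega), castSq_kron2]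

theorem isCliffordFamily_diracFamily (κ : ℕ) : IsCliffordFamily (diracFamily κ) := by
  induction κ with
  | zero =>
    exact { mul_self := fun _ => mul_one 1
            anticomm := fun i j hij => absurd (Subsingleton.elim (α := Fin 1) i j) hij }
  | succ κ ih =>
    rw [funext (diracFamily_succ κ)]
    exact ih.pauliExtension.map (flattenKronecker κ).toRingEquiv.toRingHom

theorem prod_ofFn_diracFamily (κ : ℕ) : (List.ofFn (diracFamily κ)).prod = Complex.I ^ κ • 1 := by
  induction κ with
  | zero => simp [diracFamily, diracGamma]
  | succ κ ih =>
    have map_prod : (List.ofFn (diracFamily (κ + 1))).prod =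
        flattenKronecker κ (List.ofFn (pauliExtension (diracFamily κ))).prod := by
      rw [map_list_prod, List.map_ofFn]
      exact congrArg (fun γ => (List.ofFn γ).prod) (funext (diracFamily_succ κ))
    rw [map_prod, prod_ofFn_pauliExtension ⟨κ, rfl⟩, ih, Matrix.kronecker_smul,
      Matrix.one_kronecker_one, smul_smul, map_smul, map_one, ← pow_succ']

theorem trace_prod_ofFn_diracFamily (κ : ℕ) :
    (List.ofFn (diracFamily κ)).prod.trace = (2 * Complex.I) ^ κ := by
  rw [prod_ofFn_diracFamily, Matrix.trace_smul, Matrix.trace_one, Fintype.card_fin, smul_eq_mul,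
    mul_pow, mul_comm]
  push_cast
  rfl

end Dirac

theorem flattened_trace_degree_odd_general (κ : ℕ) {E : Type*} [NormedAddCommGroup E]
    [NormedSpace ℝ E] (h : E → EuclideanSpace ℝ (Fin (2 * κ + 1 + 1))) (k : E)
    (v : Fin (2 * κ + 1) → E) (hk : h k ≠ 0) (hdiff : DifferentiableAt ℝ h k) :
    let γ₀ : Matrix (Fin (2 ^ (κ + 1))) (Fin (2 ^ (κ + 1))) ℂ :=
      diracGamma (κ + 1) ((2 * κ + 1) + 2)
    let F : E → Matrix (Fin (2 ^ (κ + 1))) (Fin (2 ^ (κ + 1))) ℂ :=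
      fun k' => ∑ j : Fin (2 * κ + 1 + 1),
        ((h k' j / ‖h k'‖ : ℝ) : ℂ) • diracGamma (κ + 1) ((j : ℕ) + 1)
    let L : Matrix (Fin (2 * κ + 1 + 1)) (Fin (2 * κ + 1 + 1)) ℝ :=
      Matrix.of (Fin.cons (fun l => h k l) (fun j l => fderiv ℝ h k (v j) l))
    ∑ ρ : Equiv.Perm (Fin (2 * κ + 1)), ((Equiv.Perm.sign ρ : ℤ) : ℂ) *
        Matrix.trace (γ₀ * (F k * (List.ofFn fun i => fderiv ℝ F k (v (ρ i))).prod))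
      = (2 * Complex.I) ^ (κ + 1) * (Nat.factorial (2 * κ + 1) : ℂ) *
          ((L.det : ℝ) : ℂ) / ((‖h k‖ : ℝ) : ℂ) ^ (2 * κ + 1 + 1) := by
  intro γ₀ F L
  rw [← trace_prod_ofFn_diracFamily]
  exact (isCliffordFamily_diracFamily (κ + 1)).sum_sign_mul_trace_flattenedHamiltonian
    ⟨κ, rfl⟩ hk hdiff v

/-- Odd-dimensional geometric identity for the flattened chiral Hamiltonian
`F(k) = H(k)/|h(k)|` with `H(k) = h(k)·Γ` and chiral matrix `γ₀ = γ_d^{d+2}`: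
`Σ_ρ sgn(ρ) tr(γ₀ F ∂_{ρ(1)}F ⋯ ∂_{ρ(d)}F) = (2i)^{(d+1)/2} d! det(L)/|h|^{d+1}`,
where `d = 2κ+1` and `L` has first row `h(k)` and remaining rows `∂h/∂k_j(k)`. -/
theorem flattened_trace_degree_odd (κ : ℕ) (hκ : 1 ≤ κ)
    (h : EuclideanSpace ℝ (Fin (2 * κ + 1)) → EuclideanSpace ℝ (Fin (2 * κ + 1 + 1)))
    (k : EuclideanSpace ℝ (Fin (2 * κ + 1)))
    (hne : ∀ x, h x ≠ 0)
    (hdiff : DifferentiableAt ℝ h k) :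
    let γ₀ : Matrix (Fin (2 ^ (κ + 1))) (Fin (2 ^ (κ + 1))) ℂ :=
      diracGamma (κ + 1) ((2 * κ + 1) + 2)
    let F : EuclideanSpace ℝ (Fin (2 * κ + 1)) →
        Matrix (Fin (2 ^ (κ + 1))) (Fin (2 ^ (κ + 1))) ℂ :=
      fun k' => ∑ j : Fin (2 * κ + 1 + 1),
        ((h k' j / ‖h k'‖ : ℝ) : ℂ) • diracGamma (κ + 1) ((j : ℕ) + 1)
    let pdF : Fin (2 * κ + 1) → Matrix (Fin (2 ^ (κ + 1))) (Fin (2 ^ (κ + 1))) ℂ :=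
      fun j => fderiv ℝ F k (EuclideanSpace.single j 1)
    let L : Matrix (Fin (2 * κ + 1 + 1)) (Fin (2 * κ + 1 + 1)) ℝ :=
      Matrix.of (Fin.cons (fun l => h k l)
        (fun (j : Fin (2 * κ + 1)) (l : Fin (2 * κ + 1 + 1)) =>
          fderiv ℝ h k (EuclideanSpace.single j 1) l))
    ∑ ρ : Equiv.Perm (Fin (2 * κ + 1)), ((Equiv.Perm.sign ρ : ℤ) : ℂ) *
        Matrix.trace (γ₀ * (F k * (List.ofFn fun i : Fin (2 * κ + 1) => pdF (ρ i)).prod))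
      = (2 * Complex.I) ^ (κ + 1) * (Nat.factorial (2 * κ + 1) : ℂ) *
          ((L.det : ℝ) : ℂ) / ((‖h k‖ : ℝ) : ℂ) ^ (2 * κ + 1 + 1) :=
  flattened_trace_degree_odd_general κ h k (fun j => EuclideanSpace.single j 1) (hne k) hdiff
end
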